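/- Third marginal entropy inequality for the classical triangle scenario: let A, B, C be mutually independent finite random variables and let X = f(B, C), Y = g(A, C), Z = h(A, B) for deterministic functions f, g, h. Then -3H(X) - 3H(Y) - 3H(Z) + 2H(X,Y) + 2H(X,Z) + 3H(Y,Z) - H(X,Y,Z) ≥ 0, where H denotes the Shannon entropy of the indicated joint random variable. -/

import Mathlib

/-!
Independence of the sources and determinism of the responses give `I(A : X | B, C) = 0`,
`I(Y : Z | A) = 0`, `I(X : Y | C) = 0` and `I(X : Z | B) = 0`. Submodularity bounds `H(A, X, Y, Z)`
by pair entropies along the 4-cycle `A - Y - X - Z - A` and `H(B, C, Y, Z)` by those along the path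
`C - Y - Z - B`. In both bounds the data processing inequality, applied to `I(Y : Z)` (twice),
`I(X : Y)` and `I(X : Z)`, replaces each pair that contains a source by a pair of observed
variables. Finally `H(A) + H(B) + H(C) + H(X, Y, Z) ≤ H(A, X, Y, Z) + H(B, C, Y, Z)`, and the source
entropies cancel.
-/

open MeasureTheory ProbabilityTheory

/-- Shannon entropy of a finite-valued random variable `X` under the measure `μ`. -/
noncomputable def entH {Ω E : Type*} [MeasurableSpace Ω] [Fintype E]
    (μ : Measure Ω) (X : Ω → E) : ℝ :=
  ∑ e : E, Real.negMulLog (μ (X ⁻¹' {e})).toReal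

/-- Mutual information `I(X : Y)`. -/
noncomputable def mutInf {Ω E F : Type*} [MeasurableSpace Ω] [Fintype E] [Fintype F]
    (μ : Measure Ω) (X : Ω → E) (Y : Ω → F) : ℝ :=
  entH μ X + entH μ Y - entH μ (fun ω => (X ω, Y ω))

/-- Conditional Shannon entropy `H(X | Y)`. -/
noncomputable def condEnt {Ω E F : Type*} [MeasurableSpace Ω] [Fintype E] [Fintype F]
    (μ : Measure Ω) (X : Ω → E) (Y : Ω → F) : ℝ :=
  entH μ (fun ω => (X ω, Y ω)) - entH μ Y

/-- Conditional mutual information `I(X : Y | Z)`. -/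
noncomputable def condMutInf {Ω E F G : Type*} [MeasurableSpace Ω]
    [Fintype E] [Fintype F] [Fintype G]
    (μ : Measure Ω) (X : Ω → E) (Y : Ω → F) (Z : Ω → G) : ℝ :=
  entH μ (fun ω => (X ω, Z ω)) + entH μ (fun ω => (Y ω, Z ω))
    - entH μ (fun ω => (X ω, Y ω, Z ω)) - entH μ Z

section NegMulLog

open Real

lemma negMulLog_sum_le {ι : Type*} (s : Finset ι) {p : ι → ℝ} (hp : ∀ i ∈ s, 0 ≤ p i) :
    negMulLog (∑ i ∈ s, p i) ≤ ∑ i ∈ s, negMulLog (p i) := by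
  rw [negMulLog, ← Finset.sum_neg_distrib, Finset.sum_mul]
  refine Finset.sum_le_sum fun i hi => ?_
  rcases (hp i hi).eq_or_lt with h0 | hpos
  · simp [← h0]
  · exact mul_le_mul_of_nonpos_left
      (log_le_log hpos (Finset.single_le_sum hp hi)) (neg_nonpos.2 hpos.le)

/-- Summed over the entries `m` of a matrix with row sums `r`, column sums `c` and total `t`, the
terms `r * c / t - m` cancel. -/
lemma negMulLog_le_add_mul_div_sub {m r c t : ℝ} (hm : 0 ≤ m) (hr : m ≤ r) (hc : m ≤ c)
    (ht : m ≤ t) :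
    negMulLog m ≤ m * log t - m * log r - m * log c + (r * c / t - m) := by
  rcases hm.eq_or_lt with rfl | hpos
  · simpa using div_nonneg (mul_nonneg hr hc) ht
  have hr' : 0 < r := hpos.trans_le hr
  have hc' : 0 < c := hpos.trans_le hc
  have ht' : 0 < t := hpos.trans_le ht
  have hlog : m * log (r * c / t / m) ≤ r * c / t - m := by
    calc m * log (r * c / t / m) ≤ m * (r * c / t / m - 1) :=
          mul_le_mul_of_nonneg_left (log_le_sub_one_of_pos (by positivity)) hm
      _ = r * c / t - m := by field_simp
  rw [log_div (by positivity) hpos.ne', log_div (by positivity) ht'.ne',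
    log_mul hr'.ne' hc'.ne'] at hlog
  rw [negMulLog]
  linarith

lemma sum_negMulLog_add_negMulLog_sum_le {ι κ : Type*} [Fintype ι] [Fintype κ] {m : ι → κ → ℝ}
    (hm : ∀ i j, 0 ≤ m i j) :
    ∑ i, ∑ j, negMulLog (m i j) + negMulLog (∑ i, ∑ j, m i j)
      ≤ ∑ i, negMulLog (∑ j, m i j) + ∑ j, negMulLog (∑ i, m i j) := by
  set r : ι → ℝ := fun i => ∑ j, m i j
  set c : κ → ℝ := fun j => ∑ i, m i j
  set t : ℝ := ∑ i, r i
  have hr (i : ι) : 0 ≤ r i := Finset.sum_nonneg fun j _ => hm i j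
  have hmr (i : ι) (j : κ) : m i j ≤ r i :=
    Finset.single_le_sum (fun j _ => hm i j) (Finset.mem_univ j)
  have hmc (i : ι) (j : κ) : m i j ≤ c j :=
    Finset.single_le_sum (f := fun i => m i j) (fun i _ => hm i j) (Finset.mem_univ i)
  have hrt (i : ι) : r i ≤ t := Finset.single_le_sum (fun i _ => hr i) (Finset.mem_univ i)
  have hct : ∑ j, c j = t := Finset.sum_comm
  have hsum := Finset.sum_le_sum fun i (_ : i ∈ Finset.univ) =>
    Finset.sum_le_sum fun j (_ : j ∈ Finset.univ) =>
      negMulLog_le_add_mul_div_sub (hm i j) (hmr i j) (hmc i j) ((hmr i j).trans (hrt i))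
  have hlog_t : ∑ i, ∑ j, m i j * log t = -negMulLog t := by
    simp only [← Finset.sum_mul]; simp [negMulLog, t, r]
  have hlog_r : ∑ i, ∑ j, m i j * log (r i) = -∑ i, negMulLog (r i) := by
    simp only [← Finset.sum_mul]; simp [negMulLog, r]
  have hlog_c : ∑ i, ∑ j, m i j * log (c j) = -∑ j, negMulLog (c j) := by
    rw [Finset.sum_comm]; simp only [← Finset.sum_mul]; simp [negMulLog, c]
  have hprod : ∑ i, ∑ j, r i * c j / t = t := by
    simp only [← Finset.sum_div, ← Finset.mul_sum, hct, ← Finset.sum_mul]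
    exact mul_self_div_self t
  simp only [Finset.sum_add_distrib, Finset.sum_sub_distrib, hlog_t, hlog_r, hlog_c, hprod]
    at hsum
  linarith

lemma sum_negMulLog_mul {ι κ : Type*} [Fintype ι] [Fintype κ] {p : ι → ℝ} {q : κ → ℝ}
    (hp : ∑ i, p i = 1) (hq : ∑ j, q j = 1) :
    ∑ k : ι × κ, negMulLog (p k.1 * q k.2) = ∑ i, negMulLog (p i) + ∑ j, negMulLog (q j) := by
  simp only [negMulLog_mul, Fintype.sum_prod_type, Finset.sum_add_distrib, ← Finset.sum_mul,
    ← Finset.mul_sum, hp, hq, one_mul]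

end NegMulLog

section Entropy

open Real Function

variable {Ω E F G K : Type*} [MeasurableSpace Ω] [Fintype E] [Fintype F] [Fintype G] [Fintype K]
  {μ : Measure Ω}

lemma entH_prodMk (X : Ω → E) (Y : Ω → F) :
    entH μ (fun ω => (X ω, Y ω)) = ∑ x, ∑ y, negMulLog (μ.real (X ⁻¹' {x} ∩ Y ⁻¹' {y})) := by
  simp only [entH, Fintype.sum_prod_type, ← Set.singleton_prod_singleton, Set.mk_preimage_prod,
    Measure.real]

lemma entH_prodMk_comm (X : Ω → E) (Y : Ω → F) :
    entH μ (fun ω => (X ω, Y ω)) = entH μ (fun ω => (Y ω, X ω)) := by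
  simp only [entH_prodMk, Set.inter_comm]
  exact Finset.sum_comm

lemma entH_prodMk_of_factorsThrough {X : Ω → E} {Y : Ω → F} (h : X.FactorsThrough Y) :
    entH μ (fun ω => (X ω, Y ω)) = entH μ Y := by
  rw [entH_prodMk_comm, entH_prodMk]
  refine Finset.sum_congr rfl fun y _ => ?_
  rcases (Y ⁻¹' {y}).eq_empty_or_nonempty with hy | ⟨ω, rfl⟩
  · simp [hy]
  rw [Fintype.sum_eq_single (X ω)]
  · have hsub : Y ⁻¹' {Y ω} ⊆ X ⁻¹' {X ω} := fun ω' hω' => h hω'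
    rw [Set.inter_eq_left.2 hsub, measureReal_def]
  · intro x hx
    have hdisj : Y ⁻¹' {Y ω} ∩ X ⁻¹' {x} = ∅ := by
      ext ω'
      simpa using fun hY hX => hx (hX.symm.trans (h hY))
    simp [hdisj]

lemma entH_congr {X : Ω → E} {Y : Ω → F} (hXY : X.FactorsThrough Y) (hYX : Y.FactorsThrough X) :
    entH μ X = entH μ Y := by
  rw [← entH_prodMk_of_factorsThrough hXY, entH_prodMk_comm, entH_prodMk_of_factorsThrough hYX]

section FiniteMeasure

variable [MeasurableSpace E] [MeasurableSingletonClass E] [MeasurableSpace F]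
  [MeasurableSingletonClass F] [IsFiniteMeasure μ]

lemma sum_measureReal_inter_preimage_singleton (s : Set Ω) {X : Ω → E} (hX : Measurable X) :
    ∑ x, μ.real (s ∩ X ⁻¹' {x}) = μ.real s := by
  have hfib (x : E) : MeasurableSet (X ⁻¹' {x}) := hX (measurableSet_singleton x)
  have h := sum_measureReal_preimage_singleton (μ := μ.restrict s) Finset.univ fun x _ => hfib x
  simpa [measureReal_restrict_apply (hfib _), Set.inter_comm] using h

lemma entH_le_of_factorsThrough {X : Ω → K} {Y : Ω → F} (hY : Measurable Y)
    (h : X.FactorsThrough Y) : entH μ X ≤ entH μ Y := by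
  rw [← entH_prodMk_of_factorsThrough h, entH_prodMk, entH]
  refine Finset.sum_le_sum fun x _ => ?_
  rw [← measureReal_def, ← sum_measureReal_inter_preimage_singleton _ hY]
  exact negMulLog_sum_le _ fun y _ => measureReal_nonneg

lemma condMutInf_nonneg {X : Ω → E} {Y : Ω → F} (hX : Measurable X) (hY : Measurable Y)
    (Z : Ω → G) : 0 ≤ condMutInf μ X Y Z := by
  let m (z : G) (x : E) (y : F) : ℝ := μ.real (Z ⁻¹' {z} ∩ (X ⁻¹' {x} ∩ Y ⁻¹' {y}))
  have hrow (z : G) (x : E) : ∑ y, m z x y = μ.real (Z ⁻¹' {z} ∩ X ⁻¹' {x}) := by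
    simp only [m, ← Set.inter_assoc]
    exact sum_measureReal_inter_preimage_singleton _ hY
  have hcol (z : G) (y : F) : ∑ x, m z x y = μ.real (Z ⁻¹' {z} ∩ Y ⁻¹' {y}) := by
    simp only [m, ← Set.inter_assoc, Set.inter_right_comm _ (X ⁻¹' _)]
    exact sum_measureReal_inter_preimage_singleton _ hX
  have htotal (z : G) : ∑ x, ∑ y, m z x y = μ.real (Z ⁻¹' {z}) := by
    simp only [hrow]
    exact sum_measureReal_inter_preimage_singleton _ hX
  have hXYZ : entH μ (fun ω => (X ω, Y ω, Z ω)) = ∑ z, ∑ x, ∑ y, negMulLog (m z x y) := by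
    calc entH μ (fun ω => (X ω, Y ω, Z ω)) = entH μ (fun ω => (Z ω, X ω, Y ω)) :=
          entH_congr (by grind [FactorsThrough]) (by grind [FactorsThrough])
      _ = ∑ z, ∑ x, ∑ y, negMulLog (m z x y) := by
          simp only [entH_prodMk, Fintype.sum_prod_type, ← Set.singleton_prod_singleton,
            Set.mk_preimage_prod, m]
  have hsum := Finset.sum_le_sum fun z (_ : z ∈ Finset.univ) =>
    sum_negMulLog_add_negMulLog_sum_le (m := m z) fun _ _ => measureReal_nonneg
  simp only [htotal] at hsum
  simp only [hrow, hcol, Finset.sum_add_distrib] at hsum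
  rw [condMutInf, hXYZ, entH_prodMk_comm X, entH_prodMk_comm Y, entH_prodMk, entH_prodMk, entH]
  simp only [← measureReal_def]
  linarith

lemma entH_submodular {T : Ω → G} {W : Ω → K} {U : Ω → E} {V : Ω → F}
    (hU : Measurable U := by fun_prop) (hV : Measurable V := by fun_prop)
    (hT : T.FactorsThrough fun ω => (U ω, V ω) := by grind [Function.FactorsThrough])
    (hWU : W.FactorsThrough U := by grind [Function.FactorsThrough])
    (hWV : W.FactorsThrough V := by grind [Function.FactorsThrough]) :
    entH μ T + entH μ W ≤ entH μ U + entH μ V := by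
  have hnonneg := condMutInf_nonneg (μ := μ) hU hV W
  have hTUV : entH μ T ≤ entH μ (fun ω => (U ω, V ω)) :=
    entH_le_of_factorsThrough (hU.prodMk hV) hT
  have hUVW : entH μ (fun ω => (U ω, V ω, W ω)) = entH μ (fun ω => (U ω, V ω)) :=
    entH_congr (by grind [FactorsThrough]) (by grind [FactorsThrough])
  rw [condMutInf, hUVW, entH_prodMk_comm U, entH_prodMk_comm V,
    entH_prodMk_of_factorsThrough hWU, entH_prodMk_of_factorsThrough hWV] at hnonneg
  linarith

end FiniteMeasure

lemma condMutInf_eq_zero_of_factorsThrough (X : Ω → E) {Y : Ω → F} {Z : Ω → G}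
    (h : Y.FactorsThrough Z) : condMutInf μ X Y Z = 0 := by
  have hXYZ : entH μ (fun ω => (X ω, Y ω, Z ω)) = entH μ (fun ω => (X ω, Z ω)) :=
    entH_congr (by grind [FactorsThrough]) (by grind [FactorsThrough])
  rw [condMutInf, hXYZ, entH_prodMk_of_factorsThrough h]
  ring

section ProbabilityMeasure

variable [MeasurableSpace E] [MeasurableSingletonClass E] [MeasurableSpace F]
  [MeasurableSingletonClass F] [IsProbabilityMeasure μ]

lemma sum_measureReal_preimage_singleton_eq_one {X : Ω → E} (hX : Measurable X) :
    ∑ x, μ.real (X ⁻¹' {x}) = 1 := by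
  simpa using sum_measureReal_inter_preimage_singleton (μ := μ) Set.univ hX

lemma mutInf_nonneg {X : Ω → E} {Y : Ω → F} (hX : Measurable X) (hY : Measurable Y) :
    0 ≤ mutInf μ X Y := by
  have hconst : entH μ (fun _ => ()) = 0 := by simp [entH]
  have hsub : entH μ (fun ω => (X ω, Y ω)) + entH μ (fun _ => ()) ≤ entH μ X + entH μ Y :=
    entH_submodular
  rw [mutInf]
  linarith

lemma entH_prodMk_prodMk_of_indep [MeasurableSpace G] [MeasurableSingletonClass G]
    {X : Ω → E} {Y : Ω → F} {Z : Ω → G}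
    (hX : Measurable X) (hY : Measurable Y) (hZ : Measurable Z)
    (hindep : ∀ x y z, μ (X ⁻¹' {x} ∩ Y ⁻¹' {y} ∩ Z ⁻¹' {z})
      = μ (X ⁻¹' {x}) * μ (Y ⁻¹' {y}) * μ (Z ⁻¹' {z})) :
    entH μ (fun ω => (X ω, Y ω, Z ω)) = entH μ X + entH μ Y + entH μ Z := by
  have hmass (k : E × F × G) : μ.real ((fun ω => (X ω, Y ω, Z ω)) ⁻¹' {k})
      = μ.real (X ⁻¹' {k.1}) * (μ.real (Y ⁻¹' {k.2.1}) * μ.real (Z ⁻¹' {k.2.2})) := by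
    obtain ⟨x, y, z⟩ := k
    simp only [← Set.singleton_prod_singleton, Set.mk_preimage_prod, ← Set.inter_assoc,
      measureReal_def, hindep, ENNReal.toReal_mul, mul_assoc]
  have hX1 := sum_measureReal_preimage_singleton_eq_one (μ := μ) hX
  have hY1 := sum_measureReal_preimage_singleton_eq_one (μ := μ) hY
  have hZ1 := sum_measureReal_preimage_singleton_eq_one (μ := μ) hZ
  have hYZ1 : ∑ k : F × G, μ.real (Y ⁻¹' {k.1}) * μ.real (Z ⁻¹' {k.2}) = 1 := by
    simp only [Fintype.sum_prod_type, ← Finset.mul_sum, hZ1, mul_one, hY1]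
  simp only [entH, ← measureReal_def, hmass]
  rw [sum_negMulLog_mul hX1 hYZ1, sum_negMulLog_mul hY1 hZ1, add_assoc]

end ProbabilityMeasure

end Entropy

section Shannon

open Function

variable {Ω E F G K : Type*} [MeasurableSpace Ω] {μ : Measure Ω}
  [Fintype E] [MeasurableSpace E] [MeasurableSingletonClass E]
  [Fintype F] [MeasurableSpace F] [MeasurableSingletonClass F]
  [Fintype G] [MeasurableSpace G] [MeasurableSingletonClass G]
  [Fintype K] [MeasurableSpace K] [MeasurableSingletonClass K]

section FiniteMeasure

variable [IsFiniteMeasure μ]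

lemma mutInf_le_left_of_condMutInf_eq_zero {X : Ω → E} {Y : Ω → F} {Z : Ω → G}
    (hX : Measurable X) (hY : Measurable Y) (hZ : Measurable Z) (h : condMutInf μ X Y Z = 0) :
    mutInf μ X Y ≤ mutInf μ Z Y := by
  have hsub : entH μ (fun ω => (X ω, Y ω, Z ω)) + entH μ X
      ≤ entH μ (fun ω => (X ω, Y ω)) + entH μ (fun ω => (X ω, Z ω)) := entH_submodular
  rw [condMutInf, entH_prodMk_comm Y] at h
  rw [mutInf, mutInf]
  linarith

lemma mutInf_le_right_of_condMutInf_eq_zero {X : Ω → E} {Y : Ω → F} {Z : Ω → G}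
    (hX : Measurable X) (hY : Measurable Y) (hZ : Measurable Z) (h : condMutInf μ X Y Z = 0) :
    mutInf μ X Y ≤ mutInf μ X Z := by
  have hsub : entH μ (fun ω => (X ω, Y ω, Z ω)) + entH μ Y
      ≤ entH μ (fun ω => (X ω, Y ω)) + entH μ (fun ω => (Y ω, Z ω)) := entH_submodular
  rw [condMutInf] at h
  rw [mutInf, mutInf]
  linarith

lemma condMutInf_le_of_factorsThrough {L : Type*} [Fintype L]
    [MeasurableSpace L] [MeasurableSingletonClass L]
    {X : Ω → E} {Y : Ω → F} {Z : Ω → G} {U : Ω → K} {V : Ω → L}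
    (hX : Measurable X) (hY : Measurable Y) (hZ : Measurable Z) (hU : Measurable U)
    (hV : Measurable V)
    (hUX : U.FactorsThrough fun ω => (X ω, Z ω)) (hVY : V.FactorsThrough fun ω => (Y ω, Z ω)) :
    condMutInf μ U V Z ≤ condMutInf μ X Y Z := by
  have hstepU : entH μ (fun ω => (X ω, Y ω, Z ω)) + entH μ (fun ω => (U ω, Z ω))
      ≤ entH μ (fun ω => (X ω, Z ω)) + entH μ (fun ω => (U ω, Y ω, Z ω)) := entH_submodular
  have hstepV : entH μ (fun ω => (U ω, Y ω, Z ω)) + entH μ (fun ω => (V ω, Z ω))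
      ≤ entH μ (fun ω => (Y ω, Z ω)) + entH μ (fun ω => (U ω, V ω, Z ω)) := entH_submodular
  rw [condMutInf, condMutInf]
  linarith

lemma condMutInf_eq_zero_of_factorsThrough_of_eq_zero
    {L : Type*} [Fintype L] [MeasurableSpace L] [MeasurableSingletonClass L]
    {X : Ω → E} {Y : Ω → F} {Z : Ω → G} {U : Ω → K} {V : Ω → L}
    (hX : Measurable X) (hY : Measurable Y) (hZ : Measurable Z) (hU : Measurable U)
    (hV : Measurable V)
    (hUX : U.FactorsThrough fun ω => (X ω, Z ω)) (hVY : V.FactorsThrough fun ω => (Y ω, Z ω))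
    (h : condMutInf μ X Y Z = 0) : condMutInf μ U V Z = 0 :=
  ((condMutInf_le_of_factorsThrough hX hY hZ hU hV hUX hVY).trans h.le).antisymm
    (condMutInf_nonneg hU hV Z)

lemma entH_cycle_le {S : Ω → E} {T : Ω → F} {U : Ω → G} {V : Ω → K}
    (hS : Measurable S) (hT : Measurable T) (hU : Measurable U) (hV : Measurable V) :
    entH μ (fun ω => (S ω, T ω, U ω, V ω)) + entH μ (fun ω => (S ω, T ω))
        + entH μ U + entH μ V
      ≤ entH μ (fun ω => (S ω, U ω)) + entH μ (fun ω => (S ω, V ω))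
        + entH μ (fun ω => (T ω, U ω)) + entH μ (fun ω => (T ω, V ω)) := by
  have hSTU : entH μ (fun ω => (S ω, T ω, U ω)) + entH μ U
      ≤ entH μ (fun ω => (S ω, U ω)) + entH μ (fun ω => (T ω, U ω)) := entH_submodular
  have hSTV : entH μ (fun ω => (S ω, T ω, V ω)) + entH μ V
      ≤ entH μ (fun ω => (S ω, V ω)) + entH μ (fun ω => (T ω, V ω)) := entH_submodular
  have hSTUV : entH μ (fun ω => (S ω, T ω, U ω, V ω)) + entH μ (fun ω => (S ω, T ω))
      ≤ entH μ (fun ω => (S ω, T ω, U ω)) + entH μ (fun ω => (S ω, T ω, V ω)) :=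
    entH_submodular
  linarith

lemma entH_path_le {S : Ω → E} {T : Ω → F} {U : Ω → G} {V : Ω → K}
    (hS : Measurable S) (hT : Measurable T) (hU : Measurable U) (hV : Measurable V) :
    entH μ (fun ω => ((S ω, T ω), U ω, V ω)) + entH μ U + entH μ V
      ≤ entH μ (fun ω => (T ω, U ω)) + entH μ (fun ω => (U ω, V ω))
        + entH μ (fun ω => (S ω, V ω)) := by
  have hTUV : entH μ (fun ω => (T ω, U ω, V ω)) + entH μ U
      ≤ entH μ (fun ω => (T ω, U ω)) + entH μ (fun ω => (U ω, V ω)) := entH_submodular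
  have hSTUV : entH μ (fun ω => ((S ω, T ω), U ω, V ω)) + entH μ V
      ≤ entH μ (fun ω => (T ω, U ω, V ω)) + entH μ (fun ω => (S ω, V ω)) := entH_submodular
  linarith

lemma entH_submodular_of_condMutInf_eq_zero {S : Ω → E} {X : Ω → F} {W : Ω → G} {T : Ω → K}
    (hS : Measurable S) (hX : Measurable X) (hW : Measurable W) (hT : Measurable T)
    (h : condMutInf μ S X W = 0) :
    entH μ (fun ω => (S ω, W ω)) + entH μ (fun ω => (X ω, T ω))
      ≤ entH μ (fun ω => (S ω, X ω, T ω)) + entH μ (fun ω => (W ω, T ω)) := by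
  have hXWT : entH μ (fun ω => (X ω, W ω, T ω)) + entH μ W
      ≤ entH μ (fun ω => (X ω, W ω)) + entH μ (fun ω => (W ω, T ω)) := entH_submodular
  have hSXWT : entH μ (fun ω => (S ω, X ω, W ω)) + entH μ (fun ω => (X ω, T ω))
      ≤ entH μ (fun ω => (S ω, X ω, T ω)) + entH μ (fun ω => (X ω, W ω, T ω)) :=
    entH_submodular
  rw [condMutInf] at h
  linarith

end FiniteMeasure

variable [IsProbabilityMeasure μ]

lemma condMutInf_eq_zero_of_entH_prodMk_prodMk_eq {X : Ω → E} {Y : Ω → F} {Z : Ω → G}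
    (hX : Measurable X) (hY : Measurable Y) (hZ : Measurable Z)
    (h : entH μ (fun ω => (X ω, Y ω, Z ω)) = entH μ X + entH μ Y + entH μ Z) :
    condMutInf μ X Y Z = 0 ∧ condMutInf μ X Z Y = 0 ∧ condMutInf μ Y Z X = 0 := by
  have hXY := mutInf_nonneg (μ := μ) hX hY
  have hXZ := mutInf_nonneg (μ := μ) hX hZ
  have hYZ := mutInf_nonneg (μ := μ) hY hZ
  have hXZY : entH μ (fun ω => (X ω, Z ω, Y ω)) = entH μ (fun ω => (X ω, Y ω, Z ω)) :=
    entH_congr (by grind [FactorsThrough]) (by grind [FactorsThrough])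
  have hYZX : entH μ (fun ω => (Y ω, Z ω, X ω)) = entH μ (fun ω => (X ω, Y ω, Z ω)) :=
    entH_congr (by grind [FactorsThrough]) (by grind [FactorsThrough])
  rw [mutInf] at hXY hXZ hYZ
  refine ⟨(condMutInf_nonneg hX hY Z).antisymm' ?_, (condMutInf_nonneg hX hZ Y).antisymm' ?_,
    (condMutInf_nonneg hY hZ X).antisymm' ?_⟩
  · rw [condMutInf]
    linarith
  · rw [condMutInf, hXZY, entH_prodMk_comm Z]
    linarith
  · rw [condMutInf, hYZX, entH_prodMk_comm Y, entH_prodMk_comm Z]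
    linarith

end Shannon

section Triangle

variable {Ω EA EB EC EX EY EZ : Type*} [MeasurableSpace Ω]
  [Fintype EA] [Fintype EB] [Fintype EC] [Fintype EX] [Fintype EY] [Fintype EZ]

/-- The entropic form of the triangle causal structure: `A`, `B`, `C` are independent sources and
`X`, `Y`, `Z` are observed at the parties that share `B, C`, resp. `A, C`, resp. `A, B`. The parties
may respond at random, so each observed variable is tied to its sources by conditional independence
only. The fields are not symmetric in `X`, `Y`, `Z`: independence from the source that is not
shared, given the two that are, is imposed on `X` alone. -/
structure IsEntropicTriangle (μ : Measure Ω) (A : Ω → EA) (B : Ω → EB) (C : Ω → EC)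
    (X : Ω → EX) (Y : Ω → EY) (Z : Ω → EZ) : Prop where
  entH_sources : entH μ (fun ω => (A ω, B ω, C ω)) = entH μ A + entH μ B + entH μ C
  markov_A_X : condMutInf μ A X (fun ω => (B ω, C ω)) = 0
  markov_Y_Z : condMutInf μ Y Z A = 0
  markov_X_Z : condMutInf μ X Z B = 0
  markov_X_Y : condMutInf μ X Y C = 0

variable [MeasurableSpace EA] [MeasurableSingletonClass EA]
  [MeasurableSpace EB] [MeasurableSingletonClass EB]
  [MeasurableSpace EC] [MeasurableSingletonClass EC]
  [MeasurableSpace EX] [MeasurableSingletonClass EX]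
  [MeasurableSpace EY] [MeasurableSingletonClass EY]
  [MeasurableSpace EZ] [MeasurableSingletonClass EZ]
  {μ : Measure Ω} [IsProbabilityMeasure μ]
  {A : Ω → EA} {B : Ω → EB} {C : Ω → EC} {X : Ω → EX} {Y : Ω → EY} {Z : Ω → EZ}

lemma isEntropicTriangle_of_indep_of_factorsThrough
    (hA : Measurable A) (hB : Measurable B) (hC : Measurable C)
    (hX : Measurable X) (hY : Measurable Y) (hZ : Measurable Z)
    (hindep : ∀ a b c, μ (A ⁻¹' {a} ∩ B ⁻¹' {b} ∩ C ⁻¹' {c})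
      = μ (A ⁻¹' {a}) * μ (B ⁻¹' {b}) * μ (C ⁻¹' {c}))
    (hXBC : X.FactorsThrough fun ω => (B ω, C ω)) (hYAC : Y.FactorsThrough fun ω => (A ω, C ω))
    (hZAB : Z.FactorsThrough fun ω => (A ω, B ω)) : IsEntropicTriangle μ A B C X Y Z := by
  have hABC := entH_prodMk_prodMk_of_indep hA hB hC hindep
  have hCBA : entH μ (fun ω => (C ω, B ω, A ω)) = entH μ C + entH μ B + entH μ A := by
    calc entH μ (fun ω => (C ω, B ω, A ω)) = entH μ (fun ω => (A ω, B ω, C ω)) :=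
          entH_congr (by grind [Function.FactorsThrough]) (by grind [Function.FactorsThrough])
      _ = entH μ C + entH μ B + entH μ A := by rw [hABC]; ring
  have hYCA : Y.FactorsThrough fun ω => (C ω, A ω) := by grind [Function.FactorsThrough]
  have hXCB : X.FactorsThrough fun ω => (C ω, B ω) := by grind [Function.FactorsThrough]
  have hZBA : Z.FactorsThrough fun ω => (B ω, A ω) := by grind [Function.FactorsThrough]
  obtain ⟨hCB, hCA, hBA⟩ := condMutInf_eq_zero_of_entH_prodMk_prodMk_eq hC hB hA hCBA
  exact
    { entH_sources := hABC
      markov_A_X := condMutInf_eq_zero_of_factorsThrough A hXBC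
      markov_Y_Z :=
        condMutInf_eq_zero_of_factorsThrough_of_eq_zero hC hB hA hY hZ hYCA hZBA hCB
      markov_X_Z :=
        condMutInf_eq_zero_of_factorsThrough_of_eq_zero hC hA hB hX hZ hXCB hZAB hCA
      markov_X_Y :=
        condMutInf_eq_zero_of_factorsThrough_of_eq_zero hB hA hC hX hY hXBC hYAC hBA }

theorem triangle_marginal_inequality_three_general
    (hA : Measurable A) (hB : Measurable B) (hC : Measurable C)
    (hX : Measurable X) (hY : Measurable Y) (hZ : Measurable Z)
    (h : IsEntropicTriangle μ A B C X Y Z) :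
    0 ≤ -3 * entH μ X - 3 * entH μ Y - 3 * entH μ Z
      + 2 * entH μ (fun ω => (X ω, Y ω)) + 2 * entH μ (fun ω => (X ω, Z ω))
      + 3 * entH μ (fun ω => (Y ω, Z ω))
      - entH μ (fun ω => (X ω, Y ω, Z ω)) := by
  have hBC := hB.prodMk hC
  have hcycle := entH_cycle_le (μ := μ) hA hX hY hZ
  have hpath := entH_path_le (μ := μ) hB hC hY hZ
  have hglue := entH_submodular_of_condMutInf_eq_zero hA hX hBC (hY.prodMk hZ) h.markov_A_X
  have hAX_le_ABC := mutInf_le_right_of_condMutInf_eq_zero hA hX hBC h.markov_A_X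
  have hBC_nonneg := mutInf_nonneg (μ := μ) hB hC
  have hYZ_le_AZ := mutInf_le_left_of_condMutInf_eq_zero hY hZ hA h.markov_Y_Z
  have hYZ_le_YA := mutInf_le_right_of_condMutInf_eq_zero hY hZ hA h.markov_Y_Z
  have hXZ_le_BZ := mutInf_le_left_of_condMutInf_eq_zero hX hZ hB h.markov_X_Z
  have hXY_le_CY := mutInf_le_left_of_condMutInf_eq_zero hX hY hC h.markov_X_Y
  simp only [mutInf] at hAX_le_ABC hBC_nonneg hYZ_le_AZ hYZ_le_YA hXZ_le_BZ hXY_le_CY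
  rw [entH_prodMk_comm Y A] at hYZ_le_YA
  linarith [h.entH_sources]

end Triangle

/-- **Third marginal entropy inequality for the classical triangle scenario**:
`-3H(X) - 3H(Y) - 3H(Z) + 2H(X,Y) + 2H(X,Z) + 3H(Y,Z) - H(X,Y,Z) ≥ 0`. -/
theorem triangle_marginal_inequality_three
    {Ω EA EB EC EX EY EZ : Type*} [MeasurableSpace Ω]
    [Fintype EA] [Fintype EB] [Fintype EC] [Fintype EX] [Fintype EY] [Fintype EZ]
    [MeasurableSpace EA] [MeasurableSingletonClass EA]
    [MeasurableSpace EB] [MeasurableSingletonClass EB]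
    [MeasurableSpace EC] [MeasurableSingletonClass EC]
    (μ : Measure Ω) [IsProbabilityMeasure μ]
    (A : Ω → EA) (B : Ω → EB) (C : Ω → EC)
    (hA : Measurable A) (hB : Measurable B) (hC : Measurable C)
    (hindep : ∀ (a : EA) (b : EB) (c : EC),
      μ (A ⁻¹' {a} ∩ B ⁻¹' {b} ∩ C ⁻¹' {c})
        = μ (A ⁻¹' {a}) * μ (B ⁻¹' {b}) * μ (C ⁻¹' {c}))
    (f : EB → EC → EX) (g : EA → EC → EY) (h : EA → EB → EZ)
    (X : Ω → EX) (Y : Ω → EY) (Z : Ω → EZ)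
    (hX : ∀ ω, X ω = f (B ω) (C ω)) (hY : ∀ ω, Y ω = g (A ω) (C ω))
    (hZ : ∀ ω, Z ω = h (A ω) (B ω)) :
    0 ≤ -3 * entH μ X - 3 * entH μ Y - 3 * entH μ Z
      + 2 * entH μ (fun ω => (X ω, Y ω)) + 2 * entH μ (fun ω => (X ω, Z ω))
      + 3 * entH μ (fun ω => (Y ω, Z ω))
      - entH μ (fun ω => (X ω, Y ω, Z ω)) := by
  let : MeasurableSpace EX := ⊤
  let : MeasurableSpace EY := ⊤
  let : MeasurableSpace EZ := ⊤
  have hXm : Measurable X := by rw [funext hX]; fun_prop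
  have hYm : Measurable Y := by rw [funext hY]; fun_prop
  have hZm : Measurable Z := by rw [funext hZ]; fun_prop
  exact triangle_marginal_inequality_three_general hA hB hC hXm hYm hZm <|
    isEntropicTriangle_of_indep_of_factorsThrough hA hB hC hXm hYm hZm hindep
      (by grind [Function.FactorsThrough]) (by grind [Function.FactorsThrough])
      (by grind [Function.FactorsThrough])
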